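/- Let n > 2k ≥ 8 and let F ⊆ C([n],k) be an intersecting family. Suppose γ(F) > C(n-u-1, n-k-1) for some integer u with 4 ≤ u ≤ k. Then |F| ≤ C(n-1,k-1) + C(n-u-1,n-k-1) - C(n-u-1,k-1) - C(n-k-2,k-2) + 1. -/

import Mathlib

open Finset

/-- The degree of an element `i` in a family `F`. -/
def deg (F : Finset (Finset ℕ)) (i : ℕ) : ℕ := (F.filter (fun S => i ∈ S)).card

/-- The maximal degree `Δ(F)` of a family `F ⊆ 2^[n]`. -/
def maxDeg (n : ℕ) (F : Finset (Finset ℕ)) : ℕ := (Finset.Icc 1 n).sup (deg F)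

/-- The diversity `γ(F) = |F| - Δ(F)`. -/
def diversity (n : ℕ) (F : Finset (Finset ℕ)) : ℕ := F.card - maxDeg n F

/-!
Fix a point `x`. The members of `F` avoiding `x` and the links of `x` in the members through `x`
are cross-intersecting, so the shadows of the complements of the former avoid the latter, and the
Kruskal–Katona theorem bounds the number of members through `x` in terms of the number avoiding
it. We write `k = q + 2` and `n = 2 * q + t + 4`; then the `t`-fold shadow of `q + t + 1`-sets is
what matters, and the bound at each value `m.choose (q + t + 1)` comes with an additional gain of
`(q + t).choose q - 1` strictly between two consecutive values.

This settles the theorem as soon as some point is avoided by at most `(n - 4).choose (k - 3)`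
members. Such a point exists whenever `F` is larger than the family of `k`-sets meeting a fixed
triple in at least two points: shifting does not create such a point, and for shifted families
without one the bound on `#F` follows by induction on `n`. If `F` is not larger than that family,
the theorem is an inequality between binomial coefficients.
-/

open scoped FinsetFamily

section Shadow

variable {α β : Type*}

lemma exists_map_mapEmbedding_eq {e : α ↪ β} {A : Finset (Finset β)}
    (hA : ∀ S ∈ A, (S : Set β) ⊆ Set.range e) :
    ∃ B : Finset (Finset α), A = B.map (mapEmbedding e).toEmbedding := by
  refine ⟨A.preimage (mapEmbedding e) (mapEmbedding e).injective.injOn, ?_⟩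
  ext S
  simp only [mem_map, mem_preimage, RelEmbedding.coe_toEmbedding, mapEmbedding_apply]
  refine ⟨fun hS ↦ ?_, by rintro ⟨U, hU, rfl⟩; exact hU⟩
  have hrange : S ⊆ (S.preimage e e.injective.injOn).map e := fun b hb ↦ by
    obtain ⟨a, rfl⟩ := hA S hS hb
    exact mem_map_of_mem e (mem_preimage.2 hb)
  obtain ⟨U, -, rfl⟩ := subset_map_iff.1 hrange
  exact ⟨U, hS, rfl⟩

lemma sized_map_mapEmbedding (e : α ↪ β) {A : Finset (Finset α)} {s : ℕ} :
    (A.map (mapEmbedding e).toEmbedding : Set (Finset β)).Sized s ↔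
      (A : Set (Finset α)).Sized s := by
  simp [Set.Sized]

variable [DecidableEq α]

lemma shadow_iterate_subset_powersetCard {X : Finset α} {A : Finset (Finset α)} {s : ℕ} (t : ℕ)
    (hA : A ⊆ X.powersetCard s) : ∂^[t] A ⊆ X.powersetCard (s - t) := by
  intro T hT
  obtain ⟨S, hS, hTS, hcard⟩ := mem_shadow_iterate_iff_exists_sdiff.1 hT
  obtain ⟨hSX, hSs⟩ := mem_powersetCard.1 (hA hS)
  rw [card_sdiff_of_subset hTS] at hcard
  have := card_le_card hTS
  exact mem_powersetCard.2 ⟨hTS.trans hSX, by omega⟩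

lemma shadow_iterate_powersetCard {X : Finset α} {s t : ℕ} (hs : s ≤ #X) (hts : t ≤ s) :
    ∂^[t] (X.powersetCard s) = X.powersetCard (s - t) := by
  refine (shadow_iterate_subset_powersetCard t Subset.rfl).antisymm fun T hT ↦ ?_
  obtain ⟨hTX, hTc⟩ := mem_powersetCard.1 hT
  obtain ⟨S, hTS, hSX, hSc⟩ := exists_subsuperset_card_eq hTX (by omega) hs
  exact mem_shadow_iterate_iff_exists_sdiff.2
    ⟨S, mem_powersetCard.2 ⟨hSX, hSc⟩, hTS, by rw [card_sdiff_of_subset hTS]; omega⟩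

lemma memberSubfamily_subset_powersetCard {X : Finset α} {A : Finset (Finset α)} {s : ℕ}
    (hA : A ⊆ X.powersetCard (s + 1)) (a : α) :
    A.memberSubfamily a ⊆ (X.erase a).powersetCard s := by
  intro S hS
  obtain ⟨haS, ha⟩ := mem_memberSubfamily.1 hS
  obtain ⟨hX, hc⟩ := mem_powersetCard.1 (hA haS)
  rw [card_insert_of_notMem ha] at hc
  exact mem_powersetCard.2 ⟨subset_erase.2 ⟨(subset_insert a S).trans hX, ha⟩, by omega⟩

lemma nonMemberSubfamily_subset_powersetCard {X : Finset α} {A : Finset (Finset α)} {s : ℕ}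
    (hA : A ⊆ X.powersetCard s) (a : α) :
    A.nonMemberSubfamily a ⊆ (X.erase a).powersetCard s := by
  intro S hS
  obtain ⟨hSA, ha⟩ := mem_nonMemberSubfamily.1 hS
  obtain ⟨hX, hc⟩ := mem_powersetCard.1 (hA hSA)
  exact mem_powersetCard.2 ⟨subset_erase.2 ⟨hX, ha⟩, hc⟩

lemma card_shadow_iterate_memberSubfamily_add_nonMemberSubfamily_le (a : α) (t : ℕ)
    (A : Finset (Finset α)) :
    #(∂^[t] (A.memberSubfamily a)) + #(∂^[t] (A.nonMemberSubfamily a)) ≤ #(∂^[t] A) := by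
  rw [← card_memberSubfamily_add_card_nonMemberSubfamily a (∂^[t] A)]
  refine add_le_add (card_le_card fun T hT ↦ ?_) (card_le_card fun T hT ↦ ?_) <;>
    obtain ⟨S, hS, hTS, hcard⟩ := mem_shadow_iterate_iff_exists_sdiff.1 hT
  · obtain ⟨hSA, haS⟩ := mem_memberSubfamily.1 hS
    refine mem_memberSubfamily.2 ⟨mem_shadow_iterate_iff_exists_sdiff.2
      ⟨insert a S, hSA, insert_subset_insert a hTS, ?_⟩, fun haT ↦ haS (hTS haT)⟩
    rwa [insert_sdiff_insert, sdiff_insert_of_notMem haS]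
  · obtain ⟨hSA, haS⟩ := mem_nonMemberSubfamily.1 hS
    exact mem_nonMemberSubfamily.2
      ⟨mem_shadow_iterate_iff_exists_sdiff.2 ⟨S, hSA, hTS, hcard⟩, fun haT ↦ haS (hTS haT)⟩

lemma shadow_iterate_map [DecidableEq β] (e : α ↪ β) (t : ℕ) (A : Finset (Finset α)) :
    ∂^[t] (A.map (mapEmbedding e).toEmbedding) = (∂^[t] A).map (mapEmbedding e).toEmbedding := by
  ext T
  simp only [mem_shadow_iterate_iff_exists_sdiff, mem_map, RelEmbedding.coe_toEmbedding,
    mapEmbedding_apply]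
  constructor
  · rintro ⟨_, ⟨S, hS, rfl⟩, hT, hcard⟩
    obtain ⟨U, hU, rfl⟩ := subset_map_iff.1 hT
    rw [← Finset.map_sdiff, card_map] at hcard
    exact ⟨U, ⟨S, hS, hU, hcard⟩, rfl⟩
  · rintro ⟨U, ⟨S, hS, hUS, hcard⟩, rfl⟩
    exact ⟨_, ⟨S, hS, rfl⟩, map_subset_map.2 hUS, by rw [← Finset.map_sdiff, card_map, hcard]⟩

end Shadow

section KruskalKatona

variable {α : Type*} [DecidableEq α]

lemma isInitSeg_map_valEmbedding {N s : ℕ} {C : Finset (Finset (Fin N))}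
    (hC : Colex.IsInitSeg (C.map (mapEmbedding Fin.valEmbedding).toEmbedding) s) :
    Colex.IsInitSeg C s := by
  refine ⟨(sized_map_mapEmbedding _).1 hC.1, fun S T hS hT ↦ ?_⟩
  have hlt : toColex (T.map Fin.valEmbedding) < toColex (S.map Fin.valEmbedding) := by
    simp only [map_eq_image]
    exact (Colex.toColex_image_lt_toColex_image Fin.val_strictMono).2 hT.1
  have hmem := hC.2 (mem_map_of_mem _ hS) ⟨hlt, (card_map _).trans hT.2⟩
  exact (mem_map' _).1 hmem

theorem card_shadow_iterate_le_of_isInitSeg {A : Finset (Finset α)} {C : Finset (Finset ℕ)}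
    {s : ℕ} (t : ℕ) (hA : (A : Set (Finset α)).Sized s) (hC : Colex.IsInitSeg C s)
    (hCA : #C ≤ #A) : #(∂^[t] C) ≤ #(∂^[t] A) := by
  obtain ⟨X, hX⟩ : ∃ X, ∀ S ∈ A, S ⊆ X := ⟨A.sup id, fun S hS ↦ le_sup (f := id) hS⟩
  obtain ⟨M, hM⟩ : ∃ M, ∀ S ∈ C, ∀ x ∈ S, x < M := ⟨(C.sup id).sup Nat.succ,
    fun S hS x hx ↦ Nat.lt_of_succ_le (le_sup (f := Nat.succ) (le_sup (f := id) hS hx))⟩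
  let ι : X ↪ Fin (max #X M) := X.equivFin.toEmbedding.trans (Fin.castLEEmb (le_max_left _ _))
  obtain ⟨A, rfl⟩ := exists_map_mapEmbedding_eq (e := Function.Embedding.subtype (· ∈ X))
    fun S hS x hx ↦ ⟨⟨x, hX S hS hx⟩, rfl⟩
  obtain ⟨C, rfl⟩ := exists_map_mapEmbedding_eq (e := Fin.valEmbedding (n := max #X M))
    fun S hS x hx ↦ ⟨⟨x, lt_max_of_lt_right (hM S hS x hx)⟩, rfl⟩
  rw [sized_map_mapEmbedding, ← sized_map_mapEmbedding ι] at hA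
  rw [card_map, card_map, ← card_map (mapEmbedding ι).toEmbedding] at hCA
  simpa only [shadow_iterate_map, card_map] using
    iterated_kk (k := t) hA hCA (isInitSeg_map_valEmbedding hC)

lemma isInitSeg_powersetCard_range (m s : ℕ) :
    Colex.IsInitSeg ((range m).powersetCard s) s := by
  refine ⟨fun S hS ↦ (mem_powersetCard.1 hS).2, fun S T hS hT ↦ ?_⟩
  refine mem_powersetCard.2 ⟨fun x hx ↦ mem_range.2 ?_, hT.2⟩
  exact Colex.forall_lt_mono hT.1.le
    (fun y hy ↦ mem_range.1 ((mem_powersetCard.1 hS).1 hy)) x hx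

lemma exists_isInitSeg_card_eq {m s c : ℕ} (hc : c ≤ m.choose s) :
    ∃ C ⊆ (range m).powersetCard s, #C = c ∧ Colex.IsInitSeg C s := by
  induction hc using Nat.decreasingInduction with
  | self => exact ⟨_, Subset.rfl, by simp, isInitSeg_powersetCard_range m s⟩
  | of_succ c _ ih =>
    obtain ⟨C, hCm, hCc, hC⟩ := ih
    obtain ⟨S, hS, hmax⟩ := exists_max_image C toColex (card_pos.1 (by omega))
    refine ⟨C.erase S, (erase_subset _ _).trans hCm, by rw [card_erase_of_mem hS, hCc]; rfl,
      hC.1.mono (erase_subset S C), fun T U hT hU ↦ mem_erase.2 ⟨?_, ?_⟩⟩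
    · rintro rfl
      exact (hmax T (mem_of_mem_erase hT)).not_gt hU.1
    · exact hC.2 (mem_of_mem_erase hT) hU

end KruskalKatona

section ShadowExpansion

variable {α : Type*} [DecidableEq α] {X : Finset α} {A : Finset (Finset α)} {s t m : ℕ}

lemma card_filter_subset_le_choose (hA : A ⊆ X.powersetCard s) {T : Finset α} (hT : T ⊆ X) :
    #{S ∈ A | T ⊆ S} ≤ (#X - #T).choose (s - #T) := by
  rw [← card_sdiff_of_subset hT, ← card_powersetCard]
  refine card_le_card_of_injOn (· \ T) (fun S hS ↦ ?_) fun S hS S' hS' hSS' ↦ ?_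
  · obtain ⟨hSA, hTS⟩ := mem_filter.1 hS
    obtain ⟨hSX, hSc⟩ := mem_powersetCard.1 (hA hSA)
    exact mem_powersetCard.2
      ⟨sdiff_subset_sdiff hSX Subset.rfl, by rw [card_sdiff_of_subset hTS, hSc]⟩
  · rw [← sdiff_union_of_subset (mem_filter.1 hS).2, ← sdiff_union_of_subset (mem_filter.1 hS').2]
    exact congrArg (· ∪ T) hSS'

lemma card_le_card_shadow_iterate (hA : A ⊆ X.powersetCard s) (h : #X + t ≤ 2 * s) :
    #A ≤ #(∂^[t] A) := by
  obtain hXs | hsX := lt_or_ge #X s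
  · rw [powersetCard_eq_empty.2 hXs, subset_empty] at hA
    simp [hA]
  refine Nat.le_of_mul_le_mul_right (card_mul_le_card_mul (fun S T ↦ T ⊆ S) (fun S hS ↦ ?_)
    fun T hT ↦ ?_) (Nat.choose_pos (n := s) (k := t) (by omega))
  · obtain ⟨-, hSc⟩ := mem_powersetCard.1 (hA hS)
    rw [← Nat.choose_symm (by omega), ← hSc, ← card_powersetCard, hSc]
    refine card_le_card fun T hT ↦ ?_
    obtain ⟨hTS, hTc⟩ := mem_powersetCard.1 hT
    exact (mem_bipartiteAbove _).2 ⟨mem_shadow_iterate_iff_exists_sdiff.2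
      ⟨S, hS, hTS, by rw [card_sdiff_of_subset hTS]; omega⟩, hTS⟩
  · obtain ⟨hTX, hTc⟩ := mem_powersetCard.1 (shadow_iterate_subset_powersetCard t hA hT)
    calc #{S ∈ A | T ⊆ S} ≤ (#X - #T).choose (s - #T) := card_filter_subset_le_choose hA hTX
      _ = (#X - #T).choose t := by congr 1; omega
      _ ≤ s.choose t := Nat.choose_le_choose t (by omega)

lemma card_add_choose_le_card_shadow_iterate (hne : A.Nonempty) (hA : A ⊆ X.powersetCard s)
    (h : #X + t < 2 * s) : #A + s.choose t ≤ #(∂^[t] A) + 1 := by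
  induction X using Finset.strongInduction generalizing A with
  | H X ih =>
  obtain ⟨S, hS⟩ := hne
  obtain ⟨hSX, hSc⟩ := mem_powersetCard.1 (hA hS)
  obtain rfl | hSX := hSX.eq_or_ssubset
  · obtain rfl : A = S.powersetCard s := by
      refine hA.antisymm ?_
      rw [← hSc, powersetCard_self]
      exact singleton_subset_iff.2 hS
    rw [shadow_iterate_powersetCard hSc.ge (by omega), card_powersetCard, card_powersetCard, hSc,
      Nat.choose_self, Nat.choose_symm (by omega), add_comm]
  · obtain ⟨x, hx, hxS⟩ := exists_of_ssubset hSX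
    obtain ⟨s, rfl⟩ : ∃ s', s = s' + 1 := Nat.exists_eq_succ_of_ne_zero (by omega)
    have hcard := card_erase_add_one hx
    have hmember := card_le_card_shadow_iterate (t := t)
      (memberSubfamily_subset_powersetCard hA x) (by omega)
    have hnonMember := ih (X.erase x) (erase_ssubset hx) ⟨S, mem_nonMemberSubfamily.2 ⟨hS, hxS⟩⟩
      (nonMemberSubfamily_subset_powersetCard hA x) (by omega)
    have hshadow := card_shadow_iterate_memberSubfamily_add_nonMemberSubfamily_le x t A
    have hsplit := card_memberSubfamily_add_card_nonMemberSubfamily x A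
    omega

lemma exists_card_eq_card_shadow_iterate_le (t : ℕ) (hA : (A : Set (Finset α)).Sized s)
    (hm : #A ≤ m.choose s) :
    ∃ C ⊆ (range m).powersetCard s, #C = #A ∧ #(∂^[t] C) ≤ #(∂^[t] A) := by
  obtain ⟨C, hCm, hCA, hC⟩ := exists_isInitSeg_card_eq hm
  exact ⟨C, hCm, hCA, card_shadow_iterate_le_of_isInitSeg t hA hC hCA.le⟩

lemma card_le_card_shadow_iterate_of_card_le_choose (hA : (A : Set (Finset α)).Sized s)
    (hm : #A ≤ m.choose s) (h : m + t ≤ 2 * s) : #A ≤ #(∂^[t] A) := by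
  obtain ⟨C, hCm, hCA, hshadow⟩ := exists_card_eq_card_shadow_iterate_le t hA hm
  rw [← hCA]
  exact (card_le_card_shadow_iterate hCm (by rwa [card_range])).trans hshadow

lemma choose_le_card_shadow_iterate (hA : (A : Set (Finset α)).Sized s) (hts : t ≤ s)
    (hsm : s ≤ m) (hm : m.choose s ≤ #A) : m.choose (s - t) ≤ #(∂^[t] A) := by
  have h := card_shadow_iterate_le_of_isInitSeg t hA (isInitSeg_powersetCard_range m s)
    (by simpa using hm)
  rwa [shadow_iterate_powersetCard (by simpa using hsm) hts, card_powersetCard, card_range] at h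

lemma nonMemberSubfamily_eq_powersetCard_range {C : Finset (Finset ℕ)} (hC : Colex.IsInitSeg C s)
    (hCm : C ⊆ (range (m + 1)).powersetCard s) (hm : m.choose s ≤ #C) :
    C.nonMemberSubfamily m = (range m).powersetCard s := by
  have hsub := nonMemberSubfamily_subset_powersetCard hCm m
  rw [range_add_one, erase_insert notMem_range_self] at hsub
  have hcard : #((range m).powersetCard s) = m.choose s := by simp
  refine hsub.antisymm fun S hS ↦ mem_nonMemberSubfamily.2
    ⟨?_, fun hmS ↦ notMem_range_self ((mem_powersetCard.1 hS).1 hmS)⟩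
  obtain hle | hle := hC.total (isInitSeg_powersetCard_range m s)
  · rwa [eq_of_subset_of_card_le hle (hcard.trans_le hm)]
  · exact hle hS

variable {q : ℕ}

-- `Y` is the link of `m` in the initial segment of size `#A`.
lemma exists_link_card_eq (hA : (A : Set (Finset α)).Sized (q + t + 1)) (hqm : q + t + 1 ≤ m)
    (hm : m.choose (q + t + 1) ≤ #A) (hm' : #A ≤ (m + 1).choose (q + t + 1)) :
    ∃ Y ⊆ (range m).powersetCard (q + t), #A = m.choose (q + t + 1) + #Y ∧
      m.choose (q + 1) + #(∂^[t] Y) ≤ #(∂^[t] A) := by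
  obtain ⟨C, hCm, hCA, hC⟩ := exists_isInitSeg_card_eq hm'
  have hnonMember := nonMemberSubfamily_eq_powersetCard_range hC hCm (hCA ▸ hm)
  have hmember := memberSubfamily_subset_powersetCard hCm m
  rw [range_add_one, erase_insert notMem_range_self] at hmember
  refine ⟨C.memberSubfamily m, hmember, ?_, ?_⟩
  · rw [← hCA, ← card_memberSubfamily_add_card_nonMemberSubfamily m C, hnonMember,
      card_powersetCard, card_range, add_comm]
  · have hshadow := card_shadow_iterate_memberSubfamily_add_nonMemberSubfamily_le m t C
    rw [hnonMember, shadow_iterate_powersetCard (by rwa [card_range]) (by omega),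
      card_powersetCard, card_range, add_comm, show q + t + 1 - t = q + 1 by omega] at hshadow
    exact hshadow.trans (card_shadow_iterate_le_of_isInitSeg t hA hC hCA.le)

lemma card_add_choose_le_card_shadow_iterate_add_choose
    (hA : (A : Set (Finset α)).Sized (q + t + 1)) (hqm : q + t + 1 ≤ m) (hm2 : 2 * q + t ≤ m)
    (hm : m.choose (q + t + 1) ≤ #A)
    (hm' : #A ≤ m.choose (q + t + 1) + (2 * q + t).choose (q + t)) :
    #A + m.choose (q + 1) ≤ #(∂^[t] A) + m.choose (q + t + 1) := by
  have hchoose := Nat.choose_le_choose (q + t) hm2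
  obtain ⟨Y, hY, hAY, hshadow⟩ := exists_link_card_eq hA hqm hm
    (by rw [Nat.choose_succ_succ']; omega)
  have := card_le_card_shadow_iterate_of_card_le_choose (t := t)
    (fun S hS ↦ (mem_powersetCard.1 (hY hS)).2) (m := 2 * q + t) (by omega) (by omega)
  omega

lemma card_add_choose_add_choose_le_card_shadow_iterate_add_choose
    (hA : (A : Set (Finset α)).Sized (q + t + 1)) (hqm : q + t + 1 ≤ m) (hm2 : m < 2 * q + t)
    (hm : m.choose (q + t + 1) < #A) (hm' : #A ≤ (m + 1).choose (q + t + 1)) :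
    #A + m.choose (q + 1) + (q + t).choose q ≤ #(∂^[t] A) + m.choose (q + t + 1) + 1 := by
  obtain ⟨Y, hY, hAY, hshadow⟩ := exists_link_card_eq hA hqm hm.le hm'
  have := card_add_choose_le_card_shadow_iterate (t := t) (card_pos.1 (by omega)) hY
    (by rw [card_range]; omega)
  rw [Nat.choose_symm_add]
  omega

end ShadowExpansion

section CrossIntersecting

variable {α : Type*}

/-- Two families are cross-intersecting if every member of the first meets every member of the
second; an intersecting family is one that is cross-intersecting with itself. -/
def CrossIntersecting (A B : Finset (Finset α)) : Prop :=
  ∀ ⦃S⦄, S ∈ A → ∀ ⦃T⦄, T ∈ B → ¬Disjoint S T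

variable {X : Finset α} {A B : Finset (Finset α)} {a b q t m : ℕ}

section

variable [DecidableEq α]

lemma crossIntersecting_self :
    CrossIntersecting A A ↔ (A : Set (Finset α)).Intersecting := Iff.rfl

lemma CrossIntersecting.nonMemberSubfamily_memberSubfamily (h : CrossIntersecting A B) (x : α) :
    CrossIntersecting (A.nonMemberSubfamily x) (B.memberSubfamily x) := by
  intro S hS T hT hdisj
  obtain ⟨hSA, hxS⟩ := mem_nonMemberSubfamily.1 hS
  exact h hSA (mem_memberSubfamily.1 hT).1 (disjoint_insert_right.2 ⟨hxS, hdisj⟩)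

lemma image_sdiff_subset_powersetCard (hA : A ⊆ X.powersetCard a) :
    A.image (X \ ·) ⊆ X.powersetCard (#X - a) := by
  refine image_subset_iff.2 fun S hS ↦ ?_
  obtain ⟨hSX, hSc⟩ := mem_powersetCard.1 (hA hS)
  exact mem_powersetCard.2 ⟨sdiff_subset, by rw [card_sdiff_of_subset hSX, hSc]⟩

lemma card_image_sdiff (hA : ∀ S ∈ A, S ⊆ X) : #(A.image (X \ ·)) = #A := by
  refine card_image_of_injOn fun S hS T hT hST ↦ ?_
  rw [← Finset.sdiff_sdiff_eq_self (hA S hS), ← Finset.sdiff_sdiff_eq_self (hA T hT)]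
  exact congrArg (X \ ·) hST

-- A `b`-set inside the complement of a member of `A` misses that member, hence is not in `B`.
theorem CrossIntersecting.card_add_card_shadow_iterate_le (h : CrossIntersecting A B)
    (hA : A ⊆ X.powersetCard a) (hB : B ⊆ X.powersetCard b) (hX : #X = a + b + t) :
    #B + #(∂^[t] (A.image (X \ ·))) ≤ (#X).choose b := by
  have hshadow := shadow_iterate_subset_powersetCard t (image_sdiff_subset_powersetCard hA)
  rw [show #X - a - t = b by omega] at hshadow
  rw [← card_powersetCard, ← card_union_of_disjoint]
  · exact card_le_card (union_subset hB hshadow)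
  · refine disjoint_left.2 fun T hTB hT ↦ ?_
    obtain ⟨U, hU, hTU, -⟩ := mem_shadow_iterate_iff_exists_sdiff.1 hT
    obtain ⟨S, hS, rfl⟩ := mem_image.1 hU
    exact h hS hTB (disjoint_sdiff.mono_right hTU)

lemma sized_image_sdiff (hA : A ⊆ X.powersetCard a) (hX : #X = a + b) :
    (A.image (X \ ·) : Set (Finset α)).Sized b := by
  intro S hS
  rw [(mem_powersetCard.1 (image_sdiff_subset_powersetCard hA hS)).2, hX, Nat.add_sub_cancel_left]

end

lemma CrossIntersecting.card_add_choose_le (h : CrossIntersecting A B)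
    (hA : A ⊆ X.powersetCard a) (hB : B ⊆ X.powersetCard b) (hX : #X = a + b + t)
    (hbm : b + t ≤ m) (hm : m.choose (b + t) ≤ #A) :
    #B + m.choose b ≤ (#X).choose b := by
  classical
  have hcard := card_image_sdiff fun S hS ↦ (mem_powersetCard.1 (hA hS)).1
  have hshadow := choose_le_card_shadow_iterate (sized_image_sdiff hA (by omega))
    (Nat.le_add_left t b) hbm (hcard ▸ hm)
  rw [Nat.add_sub_cancel] at hshadow
  have := h.card_add_card_shadow_iterate_le hA hB hX
  omega

lemma CrossIntersecting.card_add_card_add_choose_le (h : CrossIntersecting A B)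
    (hA : A ⊆ X.powersetCard a) (hB : B ⊆ X.powersetCard (q + 1)) (hX : #X = a + (q + 1) + t)
    (hqm : q + t + 1 ≤ m) (hm2 : 2 * q + t ≤ m) (hm : m.choose (q + t + 1) ≤ #A)
    (hm' : #A ≤ m.choose (q + t + 1) + (2 * q + t).choose (q + t)) :
    #A + #B + m.choose (q + 1) ≤ (#X).choose (q + 1) + m.choose (q + t + 1) := by
  classical
  have hcard := card_image_sdiff fun S hS ↦ (mem_powersetCard.1 (hA hS)).1
  rw [← hcard] at hm hm'
  have hshadow := card_add_choose_le_card_shadow_iterate_add_choose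
    (sized_image_sdiff hA (by omega)) hqm hm2 hm hm'
  have := h.card_add_card_shadow_iterate_le hA hB hX
  omega

lemma CrossIntersecting.card_add_card_add_choose_add_choose_le (h : CrossIntersecting A B)
    (hA : A ⊆ X.powersetCard a) (hB : B ⊆ X.powersetCard (q + 1)) (hX : #X = a + (q + 1) + t)
    (hqm : q + t + 1 ≤ m) (hm2 : m < 2 * q + t) (hm : m.choose (q + t + 1) < #A)
    (hm' : #A ≤ (m + 1).choose (q + t + 1)) :
    #A + #B + m.choose (q + 1) + (q + t).choose q ≤
      (#X).choose (q + 1) + m.choose (q + t + 1) + 1 := by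
  classical
  have hcard := card_image_sdiff fun S hS ↦ (mem_powersetCard.1 (hA hS)).1
  rw [← hcard] at hm hm'
  have hshadow := card_add_choose_add_choose_le_card_shadow_iterate_add_choose
    (sized_image_sdiff hA (by omega)) hqm hm2 hm hm'
  have := h.card_add_card_shadow_iterate_le hA hB hX
  omega

end CrossIntersecting

section TwoOfThree

/-- The number of `(q + 2)`-subsets of a `(2 * q + t + 4)`-set that contain at least two of three
given points. -/
def twoOfThreeCard (q t : ℕ) : ℕ := (2 * q + t + 2).choose q + 2 * (2 * q + t + 1).choose q

lemma twoOfThreeCard_add_choose_succ (q t : ℕ) :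
    twoOfThreeCard q t + (2 * q + t + 1).choose (q + 1) =
      (2 * q + t + 3).choose (q + 1) + (2 * q + t + 1).choose (q + t + 1) := by
  have hsymm : (2 * q + t + 1).choose (q + t + 1) = (2 * q + t + 1).choose q :=
    Nat.choose_symm_of_eq_add (by omega)
  rw [twoOfThreeCard, hsymm, Nat.choose_succ_succ' (2 * q + t + 2),
    Nat.choose_succ_succ' (2 * q + t + 1)]
  ring

lemma twoOfThreeCard_add_choose (q t : ℕ) :
    twoOfThreeCard q t + (2 * q + t).choose (q + 1) =
      (2 * q + t + 3).choose (q + 1) + (2 * q + t).choose (q + t + 1) := by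
  have hsucc := twoOfThreeCard_add_choose_succ q t
  have hsymm : (2 * q + t).choose (q + t) = (2 * q + t).choose q :=
    Nat.choose_symm_of_eq_add (by omega)
  rw [Nat.choose_succ_succ' (2 * q + t), Nat.choose_succ_succ' (2 * q + t), hsymm] at hsucc
  omega

lemma twoOfThreeCard_succ_succ (q t : ℕ) :
    twoOfThreeCard (q + 1) (t + 1) = twoOfThreeCard (q + 1) t + twoOfThreeCard q (t + 2) := by
  simp only [twoOfThreeCard, show 2 * (q + 1) + (t + 1) = 2 * q + t + 3 by ring,
    show 2 * (q + 1) + t = 2 * q + t + 2 by ring, ← add_assoc, Nat.choose_succ_succ' _ q]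
  ring

variable {α : Type*} [DecidableEq α] {X : Finset α} {F : Finset (Finset α)} {q t : ℕ}

lemma card_nonMemberSubfamily_le_or_lt (hX : #X = 2 * q + t + 4) (hF : F ⊆ X.powersetCard (q + 2))
    (hint : (F : Set (Finset α)).Intersecting) (hcard : twoOfThreeCard q t < #F) {x : α}
    (hx : x ∈ X) :
    #(F.nonMemberSubfamily x) ≤ (2 * q + t).choose (q + t + 1) ∨
      (2 * q + t + 1).choose (q + t + 1) + (2 * q + t).choose (q + t) <
        #(F.nonMemberSubfamily x) := by
  by_contra! ⟨hlow, hhigh⟩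
  have hXx : #(X.erase x) = 2 * q + t + 3 := by rw [card_erase_of_mem hx, hX]; rfl
  have hcross := (crossIntersecting_self.2 hint).nonMemberSubfamily_memberSubfamily x
  have hnonMember := nonMemberSubfamily_subset_powersetCard hF x
  have hmember := memberSubfamily_subset_powersetCard hF x
  have hsplit := card_memberSubfamily_add_card_nonMemberSubfamily x F
  obtain hlt | hge := lt_or_ge #(F.nonMemberSubfamily x) ((2 * q + t + 1).choose (q + t + 1))
  · have hq : q ≠ 0 := by
      rintro rfl
      simp only [mul_zero, zero_add, Nat.choose_self, Nat.choose_succ_self] at hlow hlt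
      omega
    have hbound := hcross.card_add_card_add_choose_le hnonMember hmember (t := t) (by omega)
      (m := 2 * q + t) (by omega) le_rfl hlow.le
      (by rw [Nat.choose_succ_succ'] at hlt; omega)
    have hM := twoOfThreeCard_add_choose q t
    rw [hXx] at hbound
    omega
  · have hbound := hcross.card_add_card_add_choose_le hnonMember hmember (t := t) (by omega)
      (m := 2 * q + t + 1) (by omega) (by omega) hge hhigh
    have hM := twoOfThreeCard_add_choose_succ q t
    rw [hXx] at hbound
    omega

end TwoOfThree

section Shifted

variable {α : Type*} [LinearOrder α]

/-- A family is shifted on `X` if replacing an element of a member by a smaller element of `X`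
outside that member gives a member again. -/
def IsShifted (X : Finset α) (F : Finset (Finset α)) : Prop :=
  ∀ ⦃S⦄, S ∈ F → ∀ ⦃j⦄, j ∈ S → ∀ ⦃i⦄, i ∈ X → i ∉ S → i < j → insert i (S.erase j) ∈ F

variable {X : Finset α} {F : Finset (Finset α)} {z p : α} {k q t : ℕ}

lemma IsShifted.nonMemberSubfamily (h : IsShifted X F) (z : α) :
    IsShifted (X.erase z) (F.nonMemberSubfamily z) := by
  intro S hS j hj i hi hiS hij
  obtain ⟨hSF, hzS⟩ := mem_nonMemberSubfamily.1 hS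
  obtain ⟨hiz, hiX⟩ := mem_erase.1 hi
  refine mem_nonMemberSubfamily.2 ⟨h hSF hj hiX hiS hij, ?_⟩
  simp [hzS, hiz.symm]

lemma IsShifted.memberSubfamily (h : IsShifted X F) (z : α) :
    IsShifted (X.erase z) (F.memberSubfamily z) := by
  intro S hS j hj i hi hiS hij
  obtain ⟨hSF, hzS⟩ := mem_memberSubfamily.1 hS
  obtain ⟨hiz, hiX⟩ := mem_erase.1 hi
  have hjz : j ≠ z := ne_of_mem_of_not_mem hj hzS
  have hmem := h hSF (mem_insert_of_mem hj) hiX (by simp [hiz, hiS]) hij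
  rw [erase_insert_of_ne hjz.symm, insert_comm] at hmem
  exact mem_memberSubfamily.2 ⟨hmem, by simp [hzS, hiz.symm]⟩

lemma IsShifted.insert_mem_of_mem_memberSubfamily (h : IsShifted X F) (hz : ∀ x ∈ X, x ≤ z)
    {S : Finset α} (hS : S ∈ F.memberSubfamily z) {y : α} (hy : y ∈ X.erase z) (hyS : y ∉ S) :
    insert y S ∈ F := by
  obtain ⟨hSF, hzS⟩ := mem_memberSubfamily.1 hS
  obtain ⟨hyz, hyX⟩ := mem_erase.1 hy
  have hmem := h hSF (mem_insert_self z S) hyX (by simp [hyz, hyS]) ((hz y hyX).lt_of_ne hyz)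
  rwa [erase_insert hzS] at hmem

lemma IsShifted.intersecting_memberSubfamily (h : IsShifted X F) (hF : F ⊆ X.powersetCard (k + 1))
    (hint : (F : Set (Finset α)).Intersecting) (hzX : z ∈ X) (hz : ∀ x ∈ X, x ≤ z)
    (hk : 2 * k + 1 < #X) : (F.memberSubfamily z : Set (Finset α)).Intersecting := by
  intro S hS T hT hdisj
  have hsub := memberSubfamily_subset_powersetCard hF z
  have hSc := (mem_powersetCard.1 (hsub hS)).2
  have hTc := (mem_powersetCard.1 (hsub hT)).2
  obtain ⟨y, hy, hyST⟩ : ∃ y ∈ X.erase z, y ∉ S ∪ T := by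
    refine exists_mem_notMem_of_card_lt_card ?_
    rw [card_union_of_disjoint hdisj, card_erase_of_mem hzX]
    omega
  obtain ⟨hyS, hyT⟩ := not_or.1 (mem_union.not.1 hyST)
  refine hint (h.insert_mem_of_mem_memberSubfamily hz hS hy hyS) (mem_memberSubfamily.1 hT).1 ?_
  rw [disjoint_insert_left, disjoint_insert_right]
  simp [hyT, ne_of_mem_erase hy, hdisj, (mem_memberSubfamily.1 hS).2]

-- In the complements, passing from `S` to `insert y S` removes the element `y`.
lemma IsShifted.card_memberSubfamily_le (h : IsShifted X F) (hF : F ⊆ X.powersetCard (k + 1))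
    (hzX : z ∈ X) (hz : ∀ x ∈ X, x ≤ z) (hk : 2 * (k + 1) ≤ #X) :
    #(F.memberSubfamily z) ≤ #(F.nonMemberSubfamily z) := by
  have hmember := memberSubfamily_subset_powersetCard hF z
  have hnonMember := nonMemberSubfamily_subset_powersetCard hF z
  have hcard := card_erase_add_one hzX
  rw [← card_image_sdiff fun S hS ↦ (mem_powersetCard.1 (hmember hS)).1,
    ← card_image_sdiff fun S hS ↦ (mem_powersetCard.1 (hnonMember hS)).1]
  refine (card_le_card_shadow_iterate (t := 1) (image_sdiff_subset_powersetCard hmember)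
    (by omega)).trans (card_le_card fun U hU ↦ ?_)
  obtain ⟨V, hV, y, hyV, rfl⟩ := mem_shadow_iff.1 hU
  obtain ⟨S, hS, rfl⟩ := mem_image.1 hV
  obtain ⟨hyX, hyS⟩ := mem_sdiff.1 hyV
  refine mem_image.2 ⟨insert y S, mem_nonMemberSubfamily.2
    ⟨h.insert_mem_of_mem_memberSubfamily hz hS hyX hyS, ?_⟩, sdiff_insert _ _ _⟩
  simp [(mem_memberSubfamily.1 hS).2, (ne_of_mem_erase hyX).symm]

lemma IsShifted.two_le_card_inter (h : IsShifted X F) (hint : (F : Set (Finset α)).Intersecting)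
    (hFX : ∀ S ∈ F, S ⊆ X) (hpX : p ∈ X) (hp : ∀ x ∈ X, p ≤ x) {S T : Finset α}
    (hS : S ∈ F.nonMemberSubfamily p) (hT : T ∈ F.nonMemberSubfamily p) : 2 ≤ #(S ∩ T) := by
  obtain ⟨hSF, hpS⟩ := mem_nonMemberSubfamily.1 hS
  obtain ⟨hTF, hpT⟩ := mem_nonMemberSubfamily.1 hT
  obtain ⟨x, hxS, hxT⟩ := not_disjoint_iff.1 (hint hSF hTF)
  have hpx : p < x := (hp x (hFX S hSF hxS)).lt_of_ne (ne_of_mem_of_not_mem hxS hpS).symm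
  obtain ⟨y, hyS, hyT⟩ := not_disjoint_iff.1 (hint (h hSF hxS hpX hpS hpx) hTF)
  obtain rfl | hy := mem_insert.1 hyS
  · exact absurd hyT hpT
  · obtain ⟨hyx, hyS⟩ := mem_erase.1 hy
    exact one_lt_card.2 ⟨x, mem_inter.2 ⟨hxS, hxT⟩, y, mem_inter.2 ⟨hyS, hyT⟩, hyx.symm⟩

lemma IsShifted.card_nonMemberSubfamily_le_one (h : IsShifted X F)
    (hint : (F : Set (Finset α)).Intersecting) (hF : F ⊆ X.powersetCard 2) (hpX : p ∈ X)
    (hp : ∀ x ∈ X, p ≤ x) : #(F.nonMemberSubfamily p) ≤ 1 := by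
  have hsub := nonMemberSubfamily_subset_powersetCard hF p
  refine card_le_one.2 fun S hS T hT ↦ ?_
  have htwo := h.two_le_card_inter hint (fun S hS ↦ (mem_powersetCard.1 (hF hS)).1) hpX hp hS hT
  have hSc := (mem_powersetCard.1 (hsub hS)).2
  have hTc := (mem_powersetCard.1 (hsub hT)).2
  exact (eq_of_subset_of_card_le inter_subset_left (by omega)).symm.trans
    (eq_of_subset_of_card_le inter_subset_right (by omega))

end Shifted

section ShiftedBound

lemma two_mul_twoOfThreeCard_zero (q : ℕ) :
    2 * twoOfThreeCard q 0 = (2 * q + 4).choose (q + 2) := by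
  have hsymm₃ : (2 * q + 3).choose (q + 2) = (2 * q + 3).choose (q + 1) :=
    Nat.choose_symm_of_eq_add (by omega)
  have hsymm₁ : (2 * q + 1).choose (q + 1) = (2 * q + 1).choose q :=
    Nat.choose_symm_of_eq_add (by omega)
  rw [Nat.choose_succ_succ' (2 * q + 3), hsymm₃, Nat.choose_succ_succ' (2 * q + 2),
    Nat.choose_succ_succ' (2 * q + 1), hsymm₁, twoOfThreeCard, add_zero]
  ring

section

variable {α : Type*} [DecidableEq α] {X : Finset α} {F : Finset (Finset α)} {p z : α} {q t : ℕ}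

lemma nonMemberSubfamily_comm (F : Finset (Finset α)) (x y : α) :
    (F.nonMemberSubfamily x).nonMemberSubfamily y =
      (F.nonMemberSubfamily y).nonMemberSubfamily x := by
  ext S
  simp only [mem_nonMemberSubfamily]
  tauto

lemma card_le_twoOfThreeCard_zero (hX : #X = 2 * q + 4) (hF : F ⊆ X.powersetCard (q + 2))
    (hint : (F : Set (Finset α)).Intersecting) : #F ≤ twoOfThreeCard q 0 := by
  have h := (crossIntersecting_self.2 hint).card_add_card_shadow_iterate_le hF hF (t := 0)
    (by omega)
  rw [Function.iterate_zero, id, card_image_sdiff fun S hS ↦ (mem_powersetCard.1 (hF hS)).1,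
    hX, ← two_mul_twoOfThreeCard_zero] at h
  omega

lemma card_memberSubfamily_le_twoOfThreeCard (hX : #X = 2 * q + t + 7)
    (hF : F ⊆ X.powersetCard (q + 3)) (hint : (F : Set (Finset α)).Intersecting)
    (hz : z ∈ X) (hp : p ∈ X.erase z)
    (hnonMember : (2 * q + t + 3).choose (q + t + 2) ≤
      #((F.nonMemberSubfamily z).nonMemberSubfamily p))
    (hmember : #((F.memberSubfamily z).nonMemberSubfamily p) ≤
      (2 * q + t + 2).choose (q + t + 3)) :
    #(F.memberSubfamily z) ≤ twoOfThreeCard q (t + 2) := by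
  have hX' : #((X.erase z).erase p) = 2 * q + t + 5 := by
    rw [card_erase_of_mem hp, card_erase_of_mem hz, hX]; rfl
  have hcross := ((crossIntersecting_self.2 hint).nonMemberSubfamily_memberSubfamily
    z).nonMemberSubfamily_memberSubfamily p
  have hbound := hcross.card_add_choose_le (t := t + 1) (m := 2 * q + t + 3)
    (nonMemberSubfamily_subset_powersetCard (nonMemberSubfamily_subset_powersetCard hF z) p)
    (memberSubfamily_subset_powersetCard (memberSubfamily_subset_powersetCard hF z) p)
    (by omega) (by omega) (by rwa [show q + 1 + (t + 1) = q + t + 2 by ring])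
  have hchoose : (2 * q + t + 2).choose (q + t + 3) ≤ (2 * q + t + 3).choose q := by
    rw [← Nat.choose_symm_of_eq_add (n := 2 * q + t + 3) (a := q + t + 3) (b := q) (by omega)]
    exact Nat.choose_le_choose _ (Nat.le_succ _)
  have hsplit := card_memberSubfamily_add_card_nonMemberSubfamily p (F.memberSubfamily z)
  rw [hX', Nat.choose_succ_succ' (2 * q + t + 4), Nat.choose_succ_succ' (2 * q + t + 3)] at hbound
  rw [twoOfThreeCard, show 2 * q + (t + 2) + 2 = 2 * q + t + 4 by ring,
    show 2 * q + (t + 2) + 1 = 2 * q + t + 3 by ring]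
  omega

end

section

variable {α : Type*} [LinearOrder α] {X : Finset α} {F : Finset (Finset α)} {p z : α} {k q t : ℕ}

lemma IsShifted.card_nonMemberSubfamily_le_two_mul (h : IsShifted X F)
    (hF : F ⊆ X.powersetCard (k + 1)) (hpX : p ∈ X) (hzX : z ∈ X) (hz : ∀ x ∈ X, x ≤ z)
    (hpz : p ≠ z) (hk : 2 * (k + 1) < #X) :
    #(F.nonMemberSubfamily p) ≤ 2 * #((F.nonMemberSubfamily z).nonMemberSubfamily p) := by
  rw [nonMemberSubfamily_comm, ← card_memberSubfamily_add_card_nonMemberSubfamily z, two_mul,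
    add_le_add_iff_right]
  exact (h.nonMemberSubfamily p).card_memberSubfamily_le
    (nonMemberSubfamily_subset_powersetCard hF p) (mem_erase.2 ⟨hpz.symm, hzX⟩)
    (fun x hx ↦ hz x (mem_of_mem_erase hx)) (by rw [card_erase_of_mem hpX]; omega)

lemma IsShifted.choose_lt_card_nonMemberSubfamily_nonMemberSubfamily (h : IsShifted X F)
    (hX : #X = 2 * q + t + 7) (hF : F ⊆ X.powersetCard (q + 3))
    (hint : (F : Set (Finset α)).Intersecting) (hcard : twoOfThreeCard (q + 1) (t + 1) < #F)
    (hpX : p ∈ X) (hzX : z ∈ X) (hz : ∀ x ∈ X, x ≤ z) (hpz : p ≠ z)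
    (hlt : (2 * q + t + 3).choose (q + t + 3) < #(F.nonMemberSubfamily p)) :
    (2 * q + t + 3).choose (q + t + 2) < #((F.nonMemberSubfamily z).nonMemberSubfamily p) := by
  have hgap := card_nonMemberSubfamily_le_or_lt (by omega) hF hint hcard hpX
  rw [show 2 * (q + 1) + (t + 1) = 2 * q + t + 3 by ring,
    show q + 1 + (t + 1) = q + t + 2 by ring] at hgap
  replace hgap := hgap.resolve_left hlt.not_ge
  rw [Nat.choose_succ_succ'] at hgap
  have htwo := h.card_nonMemberSubfamily_le_two_mul hF hpX hzX hz hpz (by omega)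
  omega

-- For the largest point `z` of `X`, the members avoiding `z` and the link of `z` are again shifted
-- intersecting families, and the bounds for them add up by Pascal's rule.
theorem IsShifted.card_le_twoOfThreeCard (h : IsShifted X F) (hX : #X = 2 * q + t + 4)
    (hF : F ⊆ X.powersetCard (q + 2)) (hint : (F : Set (Finset α)).Intersecting)
    (hpX : p ∈ X) (hp : ∀ x ∈ X, p ≤ x)
    (hlt : (2 * q + t).choose (q + t + 1) < #(F.nonMemberSubfamily p)) :
    #F ≤ twoOfThreeCard q t := by
  induction X using Finset.strongInduction generalizing F q t with
  | H X ih =>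
  obtain _ | t := t
  · exact card_le_twoOfThreeCard_zero hX hF hint
  by_contra! hcard
  obtain _ | q := q
  · have hone := h.card_nonMemberSubfamily_le_one hint hF hpX hp
    have hgap := card_nonMemberSubfamily_le_or_lt hX hF hint hcard hpX
    simp only [mul_zero, zero_add, Nat.choose_self, Nat.choose_succ_self] at hlt hgap
    omega
  obtain ⟨z, hzX, hz⟩ := X.exists_max_image id ⟨p, hpX⟩
  obtain ⟨x, hxX, hxp⟩ := X.exists_mem_ne (by omega) p
  have hpz : p ≠ z := (((hp x hxX).lt_of_ne hxp.symm).trans_le (hz x hxX)).ne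
  have hpXz : p ∈ X.erase z := mem_erase.2 ⟨hpz, hpX⟩
  have hp' : ∀ x ∈ X.erase z, p ≤ x := fun x hx ↦ hp x (mem_of_mem_erase hx)
  have hXz := card_erase_add_one hzX
  have hlarge := h.choose_lt_card_nonMemberSubfamily_nonMemberSubfamily (by omega) hF hint hcard
    hpX hzX hz hpz (by convert hlt using 2 <;> ring)
  have hnonMember : #(F.nonMemberSubfamily z) ≤ twoOfThreeCard (q + 1) t := by
    refine ih _ (erase_ssubset hzX) (h.nonMemberSubfamily z) (by omega)
      (nonMemberSubfamily_subset_powersetCard hF z)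
      (hint.mono (coe_subset.2 (filter_subset _ _))) hpXz hp' (lt_of_le_of_lt ?_ hlarge)
    rw [show 2 * (q + 1) + t = 2 * q + t + 2 by ring, show q + 1 + t + 1 = q + t + 2 by ring]
    exact Nat.choose_le_choose _ (Nat.le_succ _)
  have hmember : #(F.memberSubfamily z) ≤ twoOfThreeCard q (t + 2) := by
    obtain hsmall | hlarge' := le_or_gt #((F.memberSubfamily z).nonMemberSubfamily p)
      ((2 * q + t + 2).choose (q + t + 3))
    · exact card_memberSubfamily_le_twoOfThreeCard (by omega) hF hint hzX hpXz hlarge.le hsmall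
    · exact ih _ (erase_ssubset hzX) (h.memberSubfamily z) (by omega)
        (memberSubfamily_subset_powersetCard hF z)
        (h.intersecting_memberSubfamily hF hint hzX hz (by omega)) hpXz hp' hlarge'
  have hsplit := card_memberSubfamily_add_card_nonMemberSubfamily z F
  rw [twoOfThreeCard_succ_succ] at hcard
  omega

end

end ShiftedBound

section Shifting

variable {α : Type*} [DecidableEq α] {X : Finset α} {F : Finset (Finset α)} {S T : Finset α}
  {i j x : α} {k : ℕ}

lemma sup_singleton_sdiff_singleton (S : Finset α) (hij : i ≠ j) :
    (S ⊔ {i}) \ {j} = insert i (S.erase j) := by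
  rw [sup_eq_union, union_comm, ← insert_eq, sdiff_singleton_eq_erase, erase_insert_of_ne hij]

lemma compress_singleton (hi : i ∉ S) (hj : j ∈ S) :
    UV.compress {i} {j} S = insert i (S.erase j) := by
  rw [UV.compress_of_disjoint_of_le (disjoint_singleton_left.2 hi) (singleton_subset_iff.2 hj),
    sup_singleton_sdiff_singleton S (ne_of_mem_of_not_mem hj hi).symm]

lemma compress_singleton_of_notMem (hj : j ∉ S) : UV.compress {i} {j} S = S := by
  simp [UV.compress, hj]

lemma notMem_compress_singleton (hxi : x ≠ i) (hx : x ∉ S) : x ∉ UV.compress {i} {j} S := by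
  unfold UV.compress
  split_ifs <;> simp [hx, hxi]

lemma mem_and_of_mem_compression_of_notMem (hij : i ≠ j) (hT : T ∈ 𝓒 {i} {j} F) (hTF : T ∉ F) :
    i ∈ T ∧ j ∉ T ∧ insert j (T.erase i) ∈ F := by
  have hjT := disjoint_singleton_left.1 (UV.disjoint_of_mem_compression_of_notMem hT hTF)
  refine ⟨singleton_subset_iff.1 (UV.le_of_mem_compression_of_notMem hT hTF), hjT, ?_⟩
  rw [← sup_singleton_sdiff_singleton T hij.symm]
  exact UV.sup_sdiff_mem_of_mem_compression_of_notMem hT hTF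

lemma insert_erase_mem_of_mem_compression (hT : T ∈ 𝓒 {i} {j} F) (hj : j ∈ T) (hi : i ∉ T) :
    insert i (T.erase j) ∈ F := by
  rw [← sup_singleton_sdiff_singleton T (ne_of_mem_of_not_mem hj hi).symm]
  exact UV.sup_sdiff_mem_of_mem_compression hT (singleton_subset_iff.2 hj)
    (disjoint_singleton_left.2 hi)

lemma compression_subset_powersetCard (hij : i ≠ j) (hi : i ∈ X) (hF : F ⊆ X.powersetCard k) :
    𝓒 {i} {j} F ⊆ X.powersetCard k := by
  have hsized : (𝓒 {i} {j} F : Set (Finset α)).Sized k :=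
    Set.Sized.uvCompression (by simp) fun S hS ↦ (mem_powersetCard.1 (hF hS)).2
  refine fun T hT ↦ mem_powersetCard.2 ⟨fun x hx ↦ ?_, hsized hT⟩
  by_cases hTF : T ∈ F
  · exact (mem_powersetCard.1 (hF hTF)).1 hx
  · obtain ⟨-, -, hmem⟩ := mem_and_of_mem_compression_of_notMem hij hT hTF
    obtain rfl | hxi := eq_or_ne x i
    · exact hi
    · exact (mem_powersetCard.1 (hF hmem)).1 (mem_insert_of_mem (mem_erase.2 ⟨hxi, hx⟩))

lemma not_disjoint_of_mem_compression (hij : i ≠ j) (hint : (F : Set (Finset α)).Intersecting)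
    (hS : S ∈ 𝓒 {i} {j} F) (hSF : S ∉ F) (hT : T ∈ 𝓒 {i} {j} F) (hTF : T ∈ F) :
    ¬Disjoint S T := by
  intro hdisj
  obtain ⟨hiS, -, hS'⟩ := mem_and_of_mem_compression_of_notMem hij hS hSF
  have hiT := disjoint_left.1 hdisj hiS
  have herase : Disjoint (S.erase i) T := hdisj.mono_left (erase_subset i S)
  have hjT : j ∈ T := by
    by_contra hjT
    exact hint hS' hTF (disjoint_insert_left.2 ⟨hjT, herase⟩)
  have hT' := insert_erase_mem_of_mem_compression hT hjT hiT
  refine hint hS' hT' (disjoint_insert_left.2 ⟨?_, disjoint_insert_right.2 ⟨?_, ?_⟩⟩)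
  · simp [hij.symm]
  · simp
  · exact herase.mono_right (erase_subset j T)

lemma intersecting_compression (hij : i ≠ j) (hint : (F : Set (Finset α)).Intersecting) :
    (𝓒 {i} {j} F : Set (Finset α)).Intersecting := by
  intro S hS T hT
  by_cases hSF : S ∈ F <;> by_cases hTF : T ∈ F
  · exact hint hSF hTF
  · exact fun hdisj ↦ not_disjoint_of_mem_compression hij hint hT hTF hS hSF hdisj.symm
  · exact not_disjoint_of_mem_compression hij hint hS hSF hT hTF
  · exact not_disjoint_iff.2 ⟨i, (mem_and_of_mem_compression_of_notMem hij hS hSF).1,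
      (mem_and_of_mem_compression_of_notMem hij hT hTF).1⟩

lemma compression_nonMemberSubfamily_subset (hxi : x ≠ i) :
    𝓒 {i} {j} (F.nonMemberSubfamily x) ⊆ (𝓒 {i} {j} F).nonMemberSubfamily x := by
  intro T hT
  simp only [UV.mem_compression, mem_nonMemberSubfamily] at hT ⊢
  obtain ⟨⟨hTF, hxT⟩, hcomp, -⟩ | ⟨hTF, S, ⟨hSF, hxS⟩, rfl⟩ := hT
  · exact ⟨Or.inl ⟨hTF, hcomp⟩, hxT⟩
  · have hx := notMem_compress_singleton (j := j) hxi hxS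
    exact ⟨Or.inr ⟨fun hmem ↦ hTF ⟨hmem, hx⟩, S, hSF, rfl⟩, hx⟩

lemma nonMemberSubfamily_nonMemberSubfamily_subset_compression :
    (F.nonMemberSubfamily i).nonMemberSubfamily j ⊆ (𝓒 {i} {j} F).nonMemberSubfamily i := by
  intro S hS
  simp only [UV.mem_compression, mem_nonMemberSubfamily] at hS ⊢
  obtain ⟨⟨hSF, hiS⟩, hjS⟩ := hS
  rw [compress_singleton_of_notMem hjS]
  exact ⟨Or.inl ⟨hSF, hSF⟩, hiS⟩

lemma sum_compress_lt {f : α → ℕ} (hij : f i < f j) (hS : UV.compress {i} {j} S ≠ S) :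
    ∑ x ∈ UV.compress {i} {j} S, f x < ∑ x ∈ S, f x := by
  have hj : j ∈ S := by_contra fun hj ↦ hS (compress_singleton_of_notMem hj)
  have hi : i ∉ S := fun hi ↦ hS (by simp [UV.compress, hi])
  rw [compress_singleton hi hj, sum_insert fun h ↦ hi (mem_of_mem_erase h),
    ← add_sum_erase S f hj]
  exact Nat.add_lt_add_right hij _

lemma sum_sum_compression_lt {f : α → ℕ} (hij : f i < f j) (hS : S ∈ F)
    (hS' : UV.compress {i} {j} S ∉ F) :
    ∑ T ∈ 𝓒 {i} {j} F, ∑ x ∈ T, f x < ∑ T ∈ F, ∑ x ∈ T, f x := by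
  rw [UV.compression, sum_union UV.compress_disjoint, filter_image, sum_image UV.compress_injOn,
    ← sum_filter_add_sum_filter_not F (UV.compress {i} {j} · ∈ F)]
  refine Nat.add_lt_add_left (sum_lt_sum_of_nonempty ⟨S, mem_filter.2 ⟨hS, hS'⟩⟩ fun T hT ↦ ?_) _
  obtain ⟨hTF, hTF'⟩ := mem_filter.1 hT
  exact sum_compress_lt hij (ne_of_mem_of_not_mem hTF hTF').symm

end Shifting

section Binomial

lemma choose_add_le_choose {m q t : ℕ} (h : m ≤ 2 * q + t) :
    m.choose (q + t) ≤ m.choose q := by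
  have hle := card_le_card_shadow_iterate (X := range m) (s := q + t) (t := t) Subset.rfl
    (by rw [card_range]; omega)
  have hsub := card_le_card
    (shadow_iterate_subset_powersetCard (X := range m) (s := q + t) t Subset.rfl)
  rw [Nat.add_sub_cancel] at hsub
  simpa using hle.trans hsub

lemma choose_add_add_choose_le {m q t : ℕ} (h : m < 2 * q + t) (hm : q + t ≤ m) :
    m.choose (q + t) + (q + t).choose q ≤ m.choose q + 1 := by
  have hle := card_add_choose_le_card_shadow_iterate (X := range m) (s := q + t) (t := t)
    (powersetCard_nonempty.2 (by rwa [card_range])) Subset.rfl (by rw [card_range]; omega)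
  have hsub := card_le_card
    (shadow_iterate_subset_powersetCard (X := range m) (s := q + t) t Subset.rfl)
  rw [Nat.add_sub_cancel] at hsub
  simp only [card_powersetCard, card_range, ← Nat.choose_symm_add] at hle hsub
  omega

lemma choose_add_choose_succ_le (m q t d : ℕ) (h : m + d ≤ 2 * q + t) :
    (m + d).choose (q + t + 1) + m.choose (q + 1) ≤
      m.choose (q + t + 1) + (m + d).choose (q + 1) := by
  induction d with
  | zero => simp [add_comm]
  | succ d ih =>
    have hle := choose_add_le_choose (m := m + d) (q := q) (t := t) (by omega)
    rw [← add_assoc, Nat.choose_succ_succ', Nat.choose_succ_succ']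
    have := ih (by omega)
    omega

lemma twoOfThreeCard_add_choose_add_choose_le {m q t : ℕ} (hm : q + t + 1 ≤ m)
    (hm' : m < 2 * q + t) :
    twoOfThreeCard q t + m.choose (q + 1) + (q + t).choose q ≤
      (2 * q + t + 3).choose (q + 1) + m.choose (q + t + 1) + 1 := by
  obtain ⟨d, hd⟩ := Nat.exists_eq_add_of_lt hm'
  have hM := twoOfThreeCard_add_choose q t
  have hmono := choose_add_choose_succ_le m q t d (by omega)
  have hstrict := choose_add_add_choose_le (m := m + d) (q := q) (t := t) (by omega) (by omega)
  rw [hd, Nat.choose_succ_succ' (m + d), Nat.choose_succ_succ' (m + d), ← hd] at hM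
  omega

end Binomial

section Diversity

section

variable {α : Type*} [DecidableEq α] {X : Finset α} {F : Finset (Finset α)} {i j : α} {q t : ℕ}

lemma choose_lt_card_nonMemberSubfamily_nonMemberSubfamily (hX : #X = 2 * q + t + 4)
    (hF : F ⊆ X.powersetCard (q + 2)) (hint : (F : Set (Finset α)).Intersecting)
    (hcard : twoOfThreeCard q t < #F) (hi : i ∈ X) (hj : j ∈ X) (hij : i ≠ j)
    (hdiv : ∀ x ∈ X, (2 * q + t).choose (q + t + 1) < #(F.nonMemberSubfamily x)) :
    (2 * q + t).choose (q + t + 1) < #((F.nonMemberSubfamily i).nonMemberSubfamily j) := by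
  by_contra! hle
  have hgapi := (card_nonMemberSubfamily_le_or_lt hX hF hint hcard hi).resolve_left
    (hdiv i hi).not_ge
  have hgapj := (card_nonMemberSubfamily_le_or_lt hX hF hint hcard hj).resolve_left
    (hdiv j hj).not_ge
  have hspliti := card_memberSubfamily_add_card_nonMemberSubfamily j (F.nonMemberSubfamily i)
  have hsplitj := card_memberSubfamily_add_card_nonMemberSubfamily i (F.nonMemberSubfamily j)
  rw [nonMemberSubfamily_comm F j i] at hsplitj
  have hchoose : (2 * q + t).choose (q + t + 1) ≤ (2 * q + t).choose (q + t) := by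
    rw [Nat.choose_symm_of_eq_add (show 2 * q + t = q + t + q by ring)]
    exact choose_add_le_choose (t := t + 1) (by omega)
  have hX' : #((X.erase i).erase j) = 2 * q + t + 2 := by
    rw [card_erase_of_mem (mem_erase.2 ⟨hij.symm, hj⟩), card_erase_of_mem hi, hX]; rfl
  have hcross : CrossIntersecting ((F.nonMemberSubfamily i).memberSubfamily j)
      ((F.nonMemberSubfamily j).memberSubfamily i) := by
    intro S hS T hT hdisj
    simp only [mem_memberSubfamily, mem_nonMemberSubfamily] at hS hT
    refine hint hS.1.1 hT.1.1 (disjoint_insert_left.2 ⟨hT.1.2, disjoint_insert_right.2 ⟨?_, hdisj⟩⟩)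
    exact fun hiS ↦ hS.1.2 (mem_insert_of_mem hiS)
  have hmemberj := memberSubfamily_subset_powersetCard
    (nonMemberSubfamily_subset_powersetCard hF j) i
  rw [erase_right_comm] at hmemberj
  have hbound := hcross.card_add_choose_le (t := t) (m := 2 * q + t + 1)
    (memberSubfamily_subset_powersetCard (nonMemberSubfamily_subset_powersetCard hF i) j)
    hmemberj (by omega) (by omega) (by rw [show q + 1 + t = q + t + 1 by ring]; omega)
  have hsymm' : (2 * q + t + 1).choose q = (2 * q + t + 1).choose (q + t + 1) :=
    Nat.choose_symm_of_eq_add (by omega)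
  rw [hX', Nat.choose_succ_succ' (2 * q + t + 1) q, hsymm'] at hbound
  omega

end

section

variable {α : Type*} [LinearOrder α] {X : Finset α} {F : Finset (Finset α)} {q t : ℕ}

-- Replace elements `j` by smaller `i` until `F` is shifted. No such step creates a point avoided by
-- few members: `i` is the only candidate, and the members avoiding both `i` and `j` survive.
lemma exists_card_nonMemberSubfamily_le_of_linearOrder (hX : #X = 2 * q + t + 4)
    (hF : F ⊆ X.powersetCard (q + 2)) (hint : (F : Set (Finset α)).Intersecting)
    (hcard : twoOfThreeCard q t < #F) :
    ∃ x ∈ X, #(F.nonMemberSubfamily x) ≤ (2 * q + t).choose (q + t + 1) := by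
  induction hw : ∑ S ∈ F, ∑ x ∈ S, #{y ∈ X | y < x} using Nat.strong_induction_on
    generalizing F with
  | h w ih =>
  by_contra! hdiv
  by_cases hshift : IsShifted X F
  · obtain ⟨p, hpX, hp⟩ := X.exists_min_image id (card_pos.1 (by omega))
    exact (hshift.card_le_twoOfThreeCard hX hF hint hpX hp (hdiv p hpX)).not_gt hcard
  simp only [IsShifted, not_forall] at hshift
  obtain ⟨S, hS, j, hj, i, hi, hiS, hij, hnot⟩ := hshift
  have hrank : #{y ∈ X | y < i} < #{y ∈ X | y < j} := card_lt_card
    ⟨monotone_filter_right X fun y _ hy ↦ hy.trans hij,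
      fun hsub ↦ by simpa using hsub (mem_filter.2 ⟨hi, hij⟩)⟩
  have hlt := sum_sum_compression_lt (f := fun x ↦ #{y ∈ X | y < x}) hrank hS
    (by rwa [compress_singleton hiS hj])
  obtain ⟨x, hx, hle⟩ := ih _ (hlt.trans_eq hw) (compression_subset_powersetCard hij.ne hi hF)
    (intersecting_compression hij.ne hint) (by rwa [UV.card_compression]) rfl
  obtain rfl | hxi := eq_or_ne x i
  · have hjX := (mem_powersetCard.1 (hF hS)).1 hj
    exact ((choose_lt_card_nonMemberSubfamily_nonMemberSubfamily hX hF hint hcard hx hjX hij.ne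
      hdiv).trans_le (card_le_card nonMemberSubfamily_nonMemberSubfamily_subset_compression)).not_ge
      hle
  · refine (hdiv x hx).not_ge (le_trans ?_ hle)
    rw [← UV.card_compression {i} {j}]
    exact card_le_card (compression_nonMemberSubfamily_subset hxi)

end

section

variable {α : Type*} [DecidableEq α] {X : Finset α} {F : Finset (Finset α)} {m q t : ℕ}

theorem exists_card_nonMemberSubfamily_le (hX : #X = 2 * q + t + 4)
    (hF : F ⊆ X.powersetCard (q + 2)) (hint : (F : Set (Finset α)).Intersecting)
    (hcard : twoOfThreeCard q t < #F) :
    ∃ x ∈ X, #(F.nonMemberSubfamily x) ≤ (2 * q + t).choose (q + t + 1) := by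
  classical
  obtain ⟨_⟩ : Nonempty (LinearOrder α) := ⟨linearOrderOfSTO WellOrderingRel⟩
  convert exists_card_nonMemberSubfamily_le_of_linearOrder hX (F := F) (by convert hF) hint hcard

lemma card_add_choose_add_choose_le_of_card_nonMemberSubfamily_le (hX : #X = 2 * q + t + 4)
    (hF : F ⊆ X.powersetCard (q + 2)) (hint : (F : Set (Finset α)).Intersecting) {x : α}
    (hx : x ∈ X) (hm : q + t + 1 ≤ m) (hlt : m.choose (q + t + 1) < #(F.nonMemberSubfamily x))
    (hle : #(F.nonMemberSubfamily x) ≤ (2 * q + t).choose (q + t + 1)) :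
    #F + m.choose (q + 1) + (q + t).choose q ≤
      (2 * q + t + 3).choose (q + 1) + m.choose (q + t + 1) + 1 := by
  have hm' : m < 2 * q + t := by
    by_contra! h
    exact (hlt.trans_le hle).not_ge (Nat.choose_le_choose _ h)
  obtain ⟨d, hd, hd'⟩ := Nat.exists_not_and_succ_of_not_zero_of_exists
    (p := fun d ↦ #(F.nonMemberSubfamily x) ≤ (m + d).choose (q + t + 1)) hlt.not_ge
    ⟨2 * q + t - m, by rwa [Nat.add_sub_cancel' hm'.le]⟩
  have hmd : m + d < 2 * q + t := by
    by_contra! h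
    exact hd (hle.trans (Nat.choose_le_choose _ h))
  have hXx : #(X.erase x) = 2 * q + t + 3 := by rw [card_erase_of_mem hx, hX]; rfl
  have hcross := (crossIntersecting_self.2 hint).nonMemberSubfamily_memberSubfamily x
  have hbound := hcross.card_add_card_add_choose_add_choose_le (t := t) (m := m + d)
    (nonMemberSubfamily_subset_powersetCard hF x) (memberSubfamily_subset_powersetCard hF x)
    (by omega) (by omega) hmd (not_le.1 hd) hd'
  have hmono := choose_add_choose_succ_le m q t d hmd.le
  have hsplit := card_memberSubfamily_add_card_nonMemberSubfamily x F
  rw [hXx] at hbound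
  omega

theorem card_add_choose_add_choose_le (hX : #X = 2 * q + t + 4)
    (hF : F ⊆ X.powersetCard (q + 2)) (hint : (F : Set (Finset α)).Intersecting)
    (hm : q + t + 1 ≤ m) (hm' : m < 2 * q + t)
    (hdiv : ∀ x ∈ X, m.choose (q + t + 1) < #(F.nonMemberSubfamily x)) :
    #F + m.choose (q + 1) + (q + t).choose q ≤
      (2 * q + t + 3).choose (q + 1) + m.choose (q + t + 1) + 1 := by
  obtain hsmall | hlarge := le_or_gt #F (twoOfThreeCard q t)
  · have := twoOfThreeCard_add_choose_add_choose_le hm hm'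
    omega
  · obtain ⟨x, hx, hle⟩ := exists_card_nonMemberSubfamily_le hX hF hint hlarge
    exact card_add_choose_add_choose_le_of_card_nonMemberSubfamily_le hX hF hint hx hm
      (hdiv x hx) hle

theorem diversity_drop_general {n k u : ℕ} (hX : #X = n) (hnk : 2 * k ≤ n) (hu : 4 ≤ u)
    (huk : u ≤ k) (hF : F ⊆ X.powersetCard k) (hint : (F : Set (Finset α)).Intersecting)
    (hdiv : ∀ x ∈ X, (n - u - 1).choose (n - k - 1) < #(F.nonMemberSubfamily x)) :
    (#F : ℤ) ≤ ((n - 1).choose (k - 1) : ℤ) + ((n - u - 1).choose (n - k - 1) : ℤ)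
      - ((n - u - 1).choose (k - 1) : ℤ) - ((n - k - 2).choose (k - 2) : ℤ) + 1 := by
  obtain ⟨q, rfl⟩ : ∃ q, k = q + 2 := ⟨k - 2, by omega⟩
  obtain ⟨t, rfl⟩ : ∃ t, n = 2 * q + t + 4 := ⟨n - 2 * q - 4, by omega⟩
  rw [show 2 * q + t + 4 - (q + 2) - 1 = q + t + 1 by omega] at hdiv ⊢
  rw [show 2 * q + t + 4 - (q + 2) - 2 = q + t by omega]
  have := card_add_choose_add_choose_le hX hF hint (by omega) (by omega) hdiv
  simp only [Nat.add_sub_cancel, show 2 * q + t + 4 - 1 = 2 * q + t + 3 by omega,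
    show q + 2 - 1 = q + 1 by omega]
  omega

end

lemma diversity_le_card_nonMemberSubfamily {n x : ℕ} (F : Finset (Finset ℕ)) (hx : x ∈ Icc 1 n) :
    diversity n F ≤ #(F.nonMemberSubfamily x) := by
  have hdeg : deg F x ≤ maxDeg n F := le_sup hx
  have hsplit : deg F x + #(F.nonMemberSubfamily x) = #F := card_filter_add_card_filter_not _
  unfold diversity
  omega

end Diversity

/-- If `n > 2k ≥ 8`, `F ⊆ C([n],k)` is intersecting and `γ(F) > C(n-u-1,n-k-1)` for some
integer `4 ≤ u ≤ k`, then
`|F| ≤ C(n-1,k-1) + C(n-u-1,n-k-1) - C(n-u-1,k-1) - C(n-k-2,k-2) + 1`. -/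
theorem diversity_drop (n k u : ℕ) (hk : 4 ≤ k) (hnk : 2 * k < n)
    (hu4 : 4 ≤ u) (huk : u ≤ k)
    (F : Finset (Finset ℕ)) (hF : F ⊆ (Finset.Icc 1 n).powersetCard k)
    (hint : ∀ A ∈ F, ∀ B ∈ F, (A ∩ B).Nonempty)
    (hdiv : (n - u - 1).choose (n - k - 1) < diversity n F) :
    (F.card : ℤ) ≤ ((n - 1).choose (k - 1) : ℤ)
      + ((n - u - 1).choose (n - k - 1) : ℤ) - ((n - u - 1).choose (k - 1) : ℤ)
      - ((n - k - 2).choose (k - 2) : ℤ) + 1 :=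
  diversity_drop_general (by simp) hnk.le hu4 huk hF
    (fun A hA B hB ↦ not_disjoint_iff_nonempty_inter.2 (hint A hA B hB))
    fun _ hx ↦ hdiv.trans_le (diversity_le_card_nonMemberSubfamily F hx)
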